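/- Let F be a field, n a natural number, and f : A → B a homomorphism of commutative F-algebras. Let TS^n f : TS^n_F(A) → TS^n_F(B) be the restriction of the n-fold tensor power homomorphism f^{⊗n} : A^{⊗n} → B^{⊗n} to symmetric tensors. Then the kernel of TS^n f is generated as an ideal of TS^n_F(A) by the elements e_i^n(a) with 1 ≤ i ≤ n and a ∈ ker f. -/

import Mathlib

open scoped TensorProduct
open PiTensorProduct

universe u v w

namespace SymmetricProduct

set_option linter.unusedSectionVars false

variable (F : Type u) [Field F] (A : Type v) [CommRing A] [Algebra F A] (n : ℕ)

/-- The algebra homomorphism on the `n`-fold tensor power permuting factors by `σ`. -/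
noncomputable def permHom (σ : Equiv.Perm (Fin n)) :
    (⨂[F] _ : Fin n, A) →ₐ[F] (⨂[F] _ : Fin n, A) :=
  PiTensorProduct.liftAlgHom (MultilinearMap.domDomCongr σ (PiTensorProduct.tprod F))
    (by simp [MultilinearMap.domDomCongr_apply]; rfl)
    (fun x y => by
      simp only [MultilinearMap.domDomCongr_apply]
      rw [tprod_mul_tprod]; rfl)

@[simp] lemma permHom_tprod (σ : Equiv.Perm (Fin n)) (x : Fin n → A) :
    permHom F A n σ (tprod F x) = tprod F (fun i => x (σ i)) := by
  simp [permHom]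

/-- `TS^n_F(A)`: the subalgebra of symmetric tensors in the `n`-fold tensor power of `A`. -/
noncomputable def TS : Subalgebra F (⨂[F] _ : Fin n, A) where
  carrier := {x | ∀ σ : Equiv.Perm (Fin n), permHom F A n σ x = x}
  mul_mem' := fun hx hy σ => by rw [_root_.map_mul, hx σ, hy σ]
  add_mem' := fun hx hy σ => by rw [_root_.map_add, hx σ, hy σ]
  one_mem' := fun σ => map_one _
  algebraMap_mem' := fun r σ => AlgHom.commutes _ r

/-- `e_i^n(a)`: the sum over `i`-element subsets `S` of `Fin n` of the elementary tensors
having `a` in the slots of `S` and `1` elsewhere. -/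
noncomputable def esym (i : ℕ) (a : A) : ⨂[F] _ : Fin n, A :=
  ∑ S ∈ Finset.powersetCard i (Finset.univ : Finset (Fin n)),
    tprod F (fun j => if j ∈ S then a else 1)

lemma esym_mem (i : ℕ) (a : A) : esym F A n i a ∈ TS F A n := by
  intro σ
  rw [esym, map_sum]
  simp only [permHom_tprod]
  refine Finset.sum_nbij' (fun S => S.map σ.symm.toEmbedding)
    (fun S => S.map σ.toEmbedding) ?_ ?_ ?_ ?_ ?_
  · intro S hS
    simp only [Finset.mem_powersetCard_univ, Finset.card_map] at hS ⊢
    exact hS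
  · intro S hS
    simp only [Finset.mem_powersetCard_univ, Finset.card_map] at hS ⊢
    exact hS
  · intro S hS
    ext j
    simp
  · intro S hS
    ext j
    simp
  · intro S hS
    congr 1
    funext j
    have hiff : (σ j ∈ S) ↔ (j ∈ Finset.map σ.symm.toEmbedding S) := by
      constructor
      · intro h
        exact Finset.mem_map.2 ⟨σ j, h, σ.symm_apply_apply j⟩
      · intro h
        obtain ⟨s, hs, rfl⟩ := Finset.mem_map.1 h
        simpa using hs
    simp only [hiff]

/-- `e_i^n(a)` as an element of `TS^n_F(A)`. -/
noncomputable def esymT (i : ℕ) (a : A) : TS F A n := ⟨esym F A n i a, esym_mem F A n i a⟩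

lemma tprod_const_mem (a : A) : (tprod F (fun _ : Fin n => a)) ∈ TS F A n := fun σ => by
  simp

/-- `a^{⊗ n}` as an element of `TS^n_F(A)`. -/
noncomputable def tpow (a : A) : TS F A n := ⟨tprod F (fun _ : Fin n => a), tprod_const_mem F A n a⟩


/-- The `n`-fold tensor power `f^{⊗n}` of an algebra homomorphism `f : A → B`. -/
noncomputable def mapPow {B : Type v} [CommRing B] [Algebra F B] (f : A →ₐ[F] B) :
    (⨂[F] _ : Fin n, A) →ₐ[F] (⨂[F] _ : Fin n, B) :=
  PiTensorProduct.liftAlgHom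
    ((PiTensorProduct.tprod F).compLinearMap (fun _ : Fin n => f.toLinearMap))
    (by
      simp only [MultilinearMap.compLinearMap_apply, AlgHom.toLinearMap_apply, Pi.one_apply,
        _root_.map_one]
      rfl)
    (fun x y => by
      simp only [MultilinearMap.compLinearMap_apply, AlgHom.toLinearMap_apply]
      rw [tprod_mul_tprod]
      congr 1
      funext i
      simp)

@[simp] lemma mapPow_tprod {B : Type v} [CommRing B] [Algebra F B] (f : A →ₐ[F] B)
    (x : Fin n → A) :
    mapPow F A n f (tprod F x) = tprod F (fun i => f (x i)) := by
  simp [mapPow]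

lemma permHom_mapPow {B : Type v} [CommRing B] [Algebra F B] (σ : Equiv.Perm (Fin n))
    (f : A →ₐ[F] B) (x : ⨂[F] _ : Fin n, A) :
    permHom F B n σ (mapPow F A n f x) = mapPow F A n f (permHom F A n σ x) := by
  have h : (permHom F B n σ).comp (mapPow F A n f)
      = (mapPow F A n f).comp (permHom F A n σ) := by
    ext i a
    simp [PiTensorProduct.singleAlgHom_apply]
  exact DFunLike.congr_fun h x

/-- `TS^n f` : the restriction of `f^{⊗n}` to symmetric tensors. -/
noncomputable def TSmap {B : Type v} [CommRing B] [Algebra F B] (f : A →ₐ[F] B) :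
    TS F A n →ₐ[F] TS F B n :=
  AlgHom.codRestrict ((mapPow F A n f).comp (TS F A n).val) (TS F B n)
    (fun x σ => by
      simp only [AlgHom.comp_apply, Subalgebra.coe_val]
      rw [permHom_mapPow, x.2 σ])


section Helpers

open scoped Classical in
/-- The orbit of a word under permutations of the slots. -/
noncomputable def orb {n : ℕ} {ι : Type*} (φ : Fin n → ι) : Finset (Fin n → ι) :=
  Finset.univ.image (fun σ : Equiv.Perm (Fin n) => φ ∘ σ)

lemma mem_orb {n : ℕ} {ι : Type*} {φ ψ : Fin n → ι} :
    ψ ∈ orb φ ↔ ∃ σ : Equiv.Perm (Fin n), ψ = φ ∘ σ := by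
  simp [orb, eq_comm]

lemma self_mem_orb {n : ℕ} {ι : Type*} (φ : Fin n → ι) : φ ∈ orb φ :=
  mem_orb.2 ⟨1, rfl⟩

lemma orb_comp_mem {n : ℕ} {ι : Type*} {φ ψ : Fin n → ι} (h : ψ ∈ orb φ)
    (σ : Equiv.Perm (Fin n)) : ψ ∘ σ ∈ orb φ := by
  obtain ⟨τ, rfl⟩ := mem_orb.1 h
  exact mem_orb.2 ⟨τ * σ, by ext; simp⟩

lemma mem_orb_symm {n : ℕ} {ι : Type*} {φ ψ : Fin n → ι} (h : ψ ∈ orb φ) : φ ∈ orb ψ := by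
  obtain ⟨τ, rfl⟩ := mem_orb.1 h
  exact mem_orb.2 ⟨τ⁻¹, by ext; simp⟩

lemma orb_eq {n : ℕ} {ι : Type*} {φ ψ : Fin n → ι} (h : ψ ∈ orb φ) : orb ψ = orb φ := by
  ext χ
  constructor
  · intro hχ
    obtain ⟨τ, rfl⟩ := mem_orb.1 hχ
    exact orb_comp_mem h τ
  · intro hχ
    obtain ⟨τ, rfl⟩ := mem_orb.1 hχ
    exact orb_comp_mem (mem_orb_symm h) τ

open scoped Classical in
lemma mem_orb_of_card {n : ℕ} {ι : Type*} {φ ψ : Fin n → ι}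
    (h : ∀ c, (Finset.univ.filter (fun j => ψ j = c)).card
      = (Finset.univ.filter (fun j => φ j = c)).card) : ψ ∈ orb φ := by
  have e : ∀ c, Nonempty ({j // ψ j = c} ≃ {j // φ j = c}) := by
    intro c
    refine Fintype.card_eq.1 ?_
    rw [Fintype.card_subtype, Fintype.card_subtype, h c]
  refine mem_orb.2 ⟨Equiv.ofFiberEquiv (fun c => (e c).some), ?_⟩
  ext j
  exact (Equiv.ofFiberEquiv_map (fun c => (e c).some) j).symm

/-- The orbit sum. -/
noncomputable def osum {n : ℕ} {ι : Type*} (v : ι → A) (φ : Fin n → ι) : ⨂[F] _ : Fin n, A :=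
  ∑ ψ ∈ orb φ, tprod F (fun j => v (ψ j))

lemma osum_mem {n : ℕ} {ι : Type*} (v : ι → A) (φ : Fin n → ι) : osum F A v φ ∈ TS F A n := by
  intro σ
  rw [osum, map_sum]
  simp only [permHom_tprod]
  refine Finset.sum_nbij' (fun ψ => ψ ∘ σ) (fun ψ => ψ ∘ σ.symm) ?_ ?_ ?_ ?_ ?_
  · intro ψ h
    exact orb_comp_mem h σ
  · intro ψ h
    exact orb_comp_mem h σ.symm
  · intro ψ h
    ext; simp
  · intro ψ h
    ext; simp
  · intro ψ h
    rfl

lemma osum_inj {n : ℕ} {ι κ : Type*} (v : ι → A) (w : κ → A) (g : ι → κ)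
    (hg : Function.Injective g) (hv : ∀ i, w (g i) = v i) (φ : Fin n → ι) :
    osum F A w (g ∘ φ) = osum F A v φ := by
  symm
  refine Finset.sum_bij (fun ψ _ => g ∘ ψ) ?_ ?_ ?_ ?_
  · intro ψ h
    obtain ⟨τ, rfl⟩ := mem_orb.1 h
    exact mem_orb.2 ⟨τ, rfl⟩
  · intro ψ _ ψ' _ h
    exact hg.comp_left h
  · intro χ h
    obtain ⟨τ, rfl⟩ := mem_orb.1 h
    exact ⟨φ ∘ τ, mem_orb.2 ⟨τ, rfl⟩, rfl⟩
  · intro ψ _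
    simp [hv]

lemma sum_closed_mem {n : ℕ} {ι : Type*} (v : ι → A) (M : Submodule F (⨂[F] _ : Fin n, A))
    (T : Finset (Fin n → ι)) (hT : ∀ φ ∈ T, ∀ σ : Equiv.Perm (Fin n), φ ∘ σ ∈ T)
    (c : (Fin n → ι) → F) (hc : ∀ φ ∈ T, ∀ σ : Equiv.Perm (Fin n), c (φ ∘ σ) = c φ)
    (hM : ∀ φ ∈ T, c φ ≠ 0 → osum F A v φ ∈ M) :
    ∑ φ ∈ T, c φ • tprod F (fun j => v (φ j)) ∈ M := by
  classical
  rw [← Finset.sum_fiberwise_of_maps_to (t := T.image orb) (g := orb)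
    (fun φ h => Finset.mem_image_of_mem _ h)]
  refine Submodule.sum_mem _ fun o ho => ?_
  obtain ⟨φ, hφ, rfl⟩ := Finset.mem_image.1 ho
  have h1 : T.filter (fun ψ => orb ψ = orb φ) = orb φ := by
    ext ψ
    rw [Finset.mem_filter]
    constructor
    · rintro ⟨_, h⟩
      exact h ▸ self_mem_orb ψ
    · intro h
      refine ⟨?_, orb_eq h⟩
      obtain ⟨τ, rfl⟩ := mem_orb.1 h
      exact hT φ hφ τ
  rw [h1]
  have h2 : ∑ ψ ∈ orb φ, c ψ • tprod F (fun j => v (ψ j)) = c φ • osum F A v φ := by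
    rw [osum, Finset.smul_sum]
    refine Finset.sum_congr rfl fun ψ h => ?_
    obtain ⟨τ, rfl⟩ := mem_orb.1 h
    rw [hc φ hφ τ]
  rw [h2]
  by_cases h0 : c φ = 0
  · simp [h0]
  · exact M.smul_mem _ (hM φ hφ h0)

open scoped Classical in
/-- The key induction. `M` is closed under multiplication by symmetric tensors and contains
`e_i(a)` for `a ∈ I`. -/
lemma osum_mem_of {n : ℕ} (I : Ideal A) (M : Submodule F (⨂[F] _ : Fin n, A))
    (hmul : ∀ x ∈ M, ∀ y ∈ TS F A n, x * y ∈ M)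
    (he : ∀ i a, 1 ≤ i → i ≤ n → a ∈ I → esym F A n i a ∈ M) (d : ℕ) :
    ∀ {ι : Type v} (v : ι → A) (o i₀ : ι) (_ : v o = 1) (_ : i₀ ≠ o) (_ : v i₀ ∈ I)
      (φ : Fin n → ι) (_ : ∃ j, φ j = i₀)
      (_ : (Finset.univ.filter (fun j => φ j ≠ o)).card ≤ d), osum F A v φ ∈ M := by
  induction d with
  | zero =>
    intro ι v o i₀ ho hne hI φ ⟨j, hj⟩ hd
    exfalso
    have := Finset.card_eq_zero.1 (Nat.le_zero.1 hd)
    have hj' : j ∈ Finset.univ.filter (fun j => φ j ≠ o) := by simp [hj, hne]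
    rw [this] at hj'
    simp at hj'
  | succ d ih =>
    intro ι v o i₀ ho hne hI φ ⟨j₀, hj₀⟩ hd
    set S₀ : Finset (Fin n) := Finset.univ.filter (fun j => φ j = i₀) with hS₀
    set ψ₀ : Fin n → ι := fun j => if φ j = i₀ then o else φ j with hψ₀
    let g : ι → Bool × ι := fun i => if i = i₀ then (true, o) else (false, i)
    have hg : Function.Injective g := by
      intro i i' h
      simp only [g] at h
      split_ifs at h <;> simp_all
    let w : Bool × ι → A := fun p => (if p.1 = true then v i₀ else 1) * v p.2
    have hw : ∀ i, w (g i) = v i := by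
      intro i
      simp only [w, g]
      split_ifs with h <;> simp_all
    have hk1 : 1 ≤ S₀.card := Finset.card_pos.2 ⟨j₀, by simp [hS₀, hj₀]⟩
    have hkn : S₀.card ≤ n := by simpa using Finset.card_le_univ S₀
    -- the set of pairs, as words in `Bool × ι`
    let pr : Finset (Fin n) × (Fin n → ι) → (Fin n → Bool × ι) :=
      fun q j => (decide (j ∈ q.1), q.2 j)
    have hpr : Function.Injective pr := by
      rintro ⟨S, ψ⟩ ⟨S', ψ'⟩ h
      have h' := fun j => congrFun h j
      simp only [pr, Prod.mk.injEq, decide_eq_decide] at h'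
      ext1
      · ext j; exact (h' j).1
      · ext j; exact (h' j).2
    let T : Finset (Fin n → Bool × ι) :=
      (Finset.powersetCard S₀.card Finset.univ ×ˢ orb ψ₀).image pr
    have hTmem : ∀ Φ, Φ ∈ T ↔
        ((Finset.univ.filter (fun j => (Φ j).1 = true)).card = S₀.card ∧
          (fun j => (Φ j).2) ∈ orb ψ₀) := by
      intro Φ
      simp only [T, Finset.mem_image, Finset.mem_product, Finset.mem_powersetCard_univ,
        Prod.exists]
      constructor
      · rintro ⟨S, ψ, ⟨hS, hψ⟩, rfl⟩
        refine ⟨?_, hψ⟩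
        simpa [pr] using hS
      · rintro ⟨h1, h2⟩
        refine ⟨_, _, ⟨h1, h2⟩, ?_⟩
        ext1 j
        simp [pr]
    have hTclosed : ∀ Φ ∈ T, ∀ σ : Equiv.Perm (Fin n), Φ ∘ σ ∈ T := by
      intro Φ hΦ σ
      rw [hTmem] at hΦ ⊢
      refine ⟨?_, orb_comp_mem hΦ.2 σ⟩
      rw [← hΦ.1]
      refine Finset.card_bij (fun j _ => σ j) ?_ ?_ ?_
      · intro j hj
        simpa using hj
      · intro j _ j' _ h
        exact σ.injective h
      · intro j hj
        exact ⟨σ.symm j, by simpa using hj, by simp⟩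
    have hprod : esym F A n S₀.card (v i₀) * osum F A v ψ₀
        = ∑ Φ ∈ T, tprod F (fun j => w (Φ j)) := by
      rw [esym, osum, Finset.sum_mul_sum, ← Finset.sum_product',
        Finset.sum_image (fun _ _ _ _ h => hpr h)]
      refine Finset.sum_congr rfl fun q _ => ?_
      rw [PiTensorProduct.tprod_mul_tprod]
      congr 1
      ext j
      simp [w, pr]
    have hΦ₀ : g ∘ φ ∈ T := by
      rw [hTmem]
      constructor
      · congr 1
        ext j
        simp only [hS₀, Finset.mem_filter, Finset.mem_univ, true_and, Function.comp, g]
        split_ifs with h <;> simp [h]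
      · convert self_mem_orb ψ₀ using 1
        ext j
        simp only [hψ₀, Function.comp, g]
        split_ifs with h <;> rfl
    have hsub : orb (g ∘ φ) ⊆ T := by
      intro Φ h
      obtain ⟨σ, rfl⟩ := mem_orb.1 h
      exact hTclosed _ hΦ₀ σ
    have hsplit : osum F A v φ = esym F A n S₀.card (v i₀) * osum F A v ψ₀
        - ∑ Φ ∈ T \ orb (g ∘ φ), (1 : F) • tprod F (fun j => w (Φ j)) := by
      rw [hprod, ← osum_inj F A v w g hg hw φ, osum, ← Finset.sum_sdiff hsub]
      simp
    rw [hsplit]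
    refine M.sub_mem (hmul _ (he _ _ hk1 hkn hI) _ (osum_mem F A v ψ₀)) ?_
    refine sum_closed_mem F A w M _ ?_ (fun _ => 1) (fun _ _ _ => rfl) ?_
    · intro Φ hΦ σ
      rw [Finset.mem_sdiff] at hΦ ⊢
      refine ⟨hTclosed _ hΦ.1 σ, fun h => hΦ.2 ?_⟩
      have := orb_comp_mem h σ⁻¹
      convert this using 1
      ext1 j; simp
    · intro Φ hΦ _
      rw [Finset.mem_sdiff, hTmem] at hΦ
      obtain ⟨⟨hcard, horb⟩, hnot⟩ := hΦ
      have hcnt : ∀ i, (Finset.univ.filter (fun j => (Φ j).2 = i)).card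
          = (Finset.univ.filter (fun j => ψ₀ j = i)).card := by
        intro i
        obtain ⟨σ, hσ⟩ := mem_orb.1 horb
        have hσ' : ∀ j, (Φ j).2 = ψ₀ (σ j) := fun j => congrFun hσ j
        refine Finset.card_bij (fun j _ => σ j) ?_ ?_ ?_
        · intro j hj
          simpa [hσ'] using hj
        · intro j _ j' _ h
          exact σ.injective h
        · intro j hj
          exact ⟨σ.symm j, by simpa [hσ'] using hj, by simp⟩
      -- a marked slot with nontrivial second letter exists
      have hex : ∃ j, (Φ j).1 = true ∧ (Φ j).2 ≠ o := by
        by_contra! hall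
        apply hnot
        apply mem_orb_of_card
        -- count both
        have key : ∀ Ψ : Fin n → Bool × ι,
            (∀ j, (Ψ j).1 = true → (Ψ j).2 = o) →
            (Finset.univ.filter (fun j => (Ψ j).1 = true)).card = S₀.card →
            (∀ i, (Finset.univ.filter (fun j => (Ψ j).2 = i)).card
              = (Finset.univ.filter (fun j => ψ₀ j = i)).card) →
            ∀ c : Bool × ι, (Finset.univ.filter (fun j => Ψ j = c)).card
              = if c.1 = true then (if c.2 = o then S₀.card else 0) else
                (Finset.univ.filter (fun j => ψ₀ j = c.2)).card
                  - (if c.2 = o then S₀.card else 0) := by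
          intro Ψ h1 h2 h3 c
          have ht : ∀ i, (Finset.univ.filter (fun j => Ψ j = (true, i))).card
              = if i = o then S₀.card else 0 := by
            intro i
            split_ifs with hi
            · rw [← h2]
              congr 1
              ext j
              simp only [Finset.mem_filter, Finset.mem_univ, true_and, Prod.ext_iff]
              exact ⟨fun h => h.1, fun h => ⟨h, by rw [h1 j h, hi]⟩⟩
            · rw [Finset.card_eq_zero, Finset.filter_eq_empty_iff]
              intro j _ hj
              exact hi (by rw [← h1 j (by rw [hj]), hj])
          obtain ⟨b, i⟩ := c
          cases b
          · simp only [Bool.false_eq_true, if_false]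
            rw [← h3 i, ← ht i]
            have : (Finset.univ.filter (fun j => (Ψ j).2 = i)).card
                = (Finset.univ.filter (fun j => Ψ j = (false, i))).card
                  + (Finset.univ.filter (fun j => Ψ j = (true, i))).card := by
              rw [← Finset.card_union_of_disjoint]
              · congr 1
                ext j
                simp only [Finset.mem_filter, Finset.mem_univ, true_and, Finset.mem_union,
                  Prod.ext_iff]
                cases (Ψ j).1 <;> simp
              · rw [Finset.disjoint_filter]
                intro j _ h h'
                rw [h] at h'
                simp at h'
            omega
          · simpa using ht i
        intro c
        have hkey := (key Φ hall hcard hcnt c).trans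
          (key (g ∘ φ) ?_ ((hTmem _).1 hΦ₀).1 ?_ c).symm
        · convert hkey
        · intro j hj
          simp only [Function.comp, g] at hj ⊢
          split_ifs at hj ⊢ <;> simp_all
        · intro i
          congr 1
          ext j
          simp only [hψ₀, Function.comp, g, Finset.mem_filter, Finset.mem_univ, true_and]
          split_ifs with h <;> rfl
      obtain ⟨j₁, hj₁, hj₁'⟩ := hex
      refine ih w (false, o) (Φ j₁) (by simp [w, ho]) ?_ ?_ Φ ⟨j₁, rfl⟩ ?_
      · intro h
        rw [h] at hj₁
        simp at hj₁
      · simp only [w, hj₁, if_true]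
        exact I.mul_mem_right _ hI
      · -- the measure drops
        have e1 : (Finset.univ.filter (fun j => Φ j ≠ (false, o))).card
            ≤ (Finset.univ.filter (fun j => (Φ j).2 ≠ o)).card
              + ((Finset.univ.filter (fun j => (Φ j).1 = true)).erase j₁).card := by
          refine le_trans (Finset.card_le_card ?_) (Finset.card_union_le _ _)
          intro j hj
          simp only [Finset.mem_filter, Finset.mem_univ, true_and, Finset.mem_union,
            Finset.mem_erase, ne_eq, Prod.ext_iff, not_and] at hj ⊢
          by_cases h : (Φ j).2 = o
          · right
            refine ⟨?_, ?_⟩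
            · rintro rfl
              exact hj₁' h
            · by_contra h'
              exact hj (by simpa using h') h
          · exact Or.inl h
        have e2 : ((Finset.univ.filter (fun j => (Φ j).1 = true)).erase j₁).card + 1
            = S₀.card := by
          rw [← hcard]
          exact Finset.card_erase_add_one (by simp [hj₁])
        have e3 : (Finset.univ.filter (fun j => (Φ j).2 = o)).card
            + (Finset.univ.filter (fun j => (Φ j).2 ≠ o)).card = n := by
          simpa using Finset.card_filter_add_card_filter_not (s := Finset.univ)
            (fun j => (Φ j).2 = o)
        have e4 : (Finset.univ.filter (fun j => ψ₀ j = o)).card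
            + (Finset.univ.filter (fun j => ψ₀ j ≠ o)).card = n := by
          simpa using Finset.card_filter_add_card_filter_not (s := Finset.univ)
            (fun j => ψ₀ j = o)
        have e5 : (Finset.univ.filter (fun j => φ j ≠ o)).card
            = (Finset.univ.filter (fun j => ψ₀ j ≠ o)).card + S₀.card := by
          rw [hS₀, ← Finset.card_union_of_disjoint]
          · congr 1
            ext j
            simp only [hψ₀, Finset.mem_filter, Finset.mem_univ, true_and, Finset.mem_union]
            by_cases h : φ j = i₀ <;> simp [h, hne]
          · rw [Finset.disjoint_filter]
            intro j _ h h'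
            simp [hψ₀, h'] at h
        have e6 := hcnt o
        have e7 : (Finset.univ.filter (fun j => Φ j ≠ (false, o))).card ≤ d := by omega
        convert e7

lemma exists_adapted_basis {B : Type v} [CommRing B] [Algebra F B] (f : A →ₐ[F] B) :
    ∃ (ι : Type v) (b : Module.Basis ι F A), ∀ i, f (b i) = 0 ∨
      ∃ l : B →ₗ[F] F, ∀ y, l (f y) = b.repr y i := by
  obtain ⟨C, hC⟩ := Submodule.exists_isCompl (LinearMap.ker f.toLinearMap)
  let b₁ := Module.Basis.ofVectorSpace F (LinearMap.ker f.toLinearMap)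
  let b₂ := Module.Basis.ofVectorSpace F C
  let b := (b₁.prod b₂).map (Submodule.prodEquivOfIsCompl _ _ hC)
  refine ⟨_, b, ?_⟩
  rintro (i | i)
  · left
    have : b (Sum.inl i) ∈ LinearMap.ker f.toLinearMap := by
      simp [b]
    simpa using this
  · right
    have h : b.coord (Sum.inr i) ∈ LinearMap.range f.toLinearMap.dualMap := by
      rw [LinearMap.range_dualMap_eq_dualAnnihilator_ker, Submodule.mem_dualAnnihilator]
      intro y hy
      have : (Submodule.prodEquivOfIsCompl _ _ hC).symm y = (⟨y, hy⟩, 0) := by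
        rw [LinearEquiv.symm_apply_eq]
        simp
      simp [b, this]
    obtain ⟨l, hl⟩ := h
    refine ⟨l, fun y => ?_⟩
    exact LinearMap.congr_fun hl y

lemma mem_of_ker {n : ℕ} {B : Type v} [CommRing B] [Algebra F B] (f : A →ₐ[F] B)
    (M : Submodule F (⨂[F] _ : Fin n, A))
    (hmul : ∀ x ∈ M, ∀ y ∈ TS F A n, x * y ∈ M)
    (he : ∀ i a, 1 ≤ i → i ≤ n → f a = 0 → esym F A n i a ∈ M)
    (x : ⨂[F] _ : Fin n, A) (hx : x ∈ TS F A n) (hfx : mapPow F A n f x = 0) : x ∈ M := by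
  classical
  obtain ⟨ι, b, hb⟩ := exists_adapted_basis F A f
  let bb := Basis.piTensorProduct (fun _ : Fin n => b)
  have hinv : ∀ (p : Fin n → ι) (σ : Equiv.Perm (Fin n)), bb.repr x (p ∘ σ) = bb.repr x p := by
    intro p σ
    have h : (bb.coord (p ∘ σ)) ∘ₗ (permHom F A n σ).toLinearMap = bb.coord p := by
      ext y
      simp only [LinearMap.compMultilinearMap_apply, LinearMap.comp_apply,
        AlgHom.toLinearMap_apply, permHom_tprod, Module.Basis.coord_apply, bb,
        Basis.piTensorProduct_repr_tprod_apply, Function.comp]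
      exact Equiv.prod_comp σ (fun j => b.repr (y j) (p j))
    have h' := LinearMap.congr_fun h x
    simpa [hx σ] using h'
  have hzero : ∀ p : Fin n → ι, (∀ j, f (b (p j)) ≠ 0) → bb.repr x p = 0 := by
    intro p hp
    have hl : ∀ j, ∃ l : B →ₗ[F] F, ∀ y, l (f y) = b.repr y (p j) :=
      fun j => (hb (p j)).resolve_left (hp j)
    choose l hl using hl
    let L : (⨂[F] _ : Fin n, B) →ₗ[F] F :=
      PiTensorProduct.lift ((MultilinearMap.mkPiAlgebra F (Fin n) F).compLinearMap l)
    have h : L ∘ₗ (mapPow F A n f).toLinearMap = bb.coord p := by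
      ext y
      simp [L, bb, hl]
    have h' := LinearMap.congr_fun h x
    simpa [hfx] using h'.symm
  have hsum : x = ∑ p ∈ (bb.repr x).support, bb.repr x p • tprod F (fun j => b (p j)) := by
    conv_lhs => rw [← bb.linearCombination_repr x]
    rw [Finsupp.linearCombination_apply, Finsupp.sum]
    simp [bb]
  rw [hsum]
  refine sum_closed_mem F A b M _ ?_ (fun p => bb.repr x p) (fun p _ σ => hinv p σ) ?_
  · intro p hp σ
    rw [Finsupp.mem_support_iff] at hp ⊢
    rwa [hinv]
  · intro p _ hp
    have hex : ∃ j, f (b (p j)) = 0 := by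
      by_contra! h
      exact hp (hzero p h)
    obtain ⟨j, hj⟩ := hex
    let v' : Option ι → A := fun i => i.elim 1 b
    rw [← osum_inj F A b v' some (Option.some_injective _) (fun i => rfl) p]
    exact osum_mem_of F A (RingHom.ker f) M hmul
      (fun i a h1 h2 h3 => he i a h1 h2 h3) _ v' none (some (p j)) rfl (by simp) hj
      (some ∘ p) ⟨j, rfl⟩ le_rfl

end Helpers

/-- **Kernel of `TS^n f`.** For a homomorphism `f : A → B` of commutative algebras over a
field `F`, the kernel of `TS^n f : TS^n_F(A) → TS^n_F(B)` (the restriction of `f^{⊗n}` to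
symmetric tensors) is generated as an ideal by the elements `e_i^n(a)` with `1 ≤ i ≤ n` and
`a ∈ ker f`. -/
theorem ker_TSmap_eq_span_esym (B : Type v) [CommRing B] [Algebra F B] (f : A →ₐ[F] B) :
    RingHom.ker (TSmap F A n (B := B) f) =
      Ideal.span {x : TS F A n | ∃ (i : ℕ) (a : A),
        1 ≤ i ∧ i ≤ n ∧ f a = 0 ∧ x = esymT F A n i a} := by
  apply le_antisymm
  · intro x hx
    set J : Ideal (TS F A n) := Ideal.span {x : TS F A n | ∃ (i : ℕ) (a : A),
        1 ≤ i ∧ i ≤ n ∧ f a = 0 ∧ x = esymT F A n i a} with hJ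
    let M : Submodule F (⨂[F] _ : Fin n, A) :=
      (J.restrictScalars F).map (TS F A n).val.toLinearMap
    have hM : ∀ y : TS F A n, (y : ⨂[F] _ : Fin n, A) ∈ M ↔ y ∈ J := by
      intro y
      constructor
      · rintro ⟨z, hz, hzy⟩
        have : z = y := Subtype.ext hzy
        exact this ▸ hz
      · intro hy
        exact ⟨y, hy, rfl⟩
    have hfx : mapPow F A n f (x : ⨂[F] _ : Fin n, A) = 0 :=
      congrArg Subtype.val ((RingHom.mem_ker).1 hx)
    refine (hM x).1 (mem_of_ker F A f M ?_ ?_ x x.2 hfx)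
    · rintro _ ⟨z, hz, rfl⟩ y hy
      exact (hM (z * ⟨y, hy⟩)).2 (J.mul_mem_right _ hz)
    · intro i a h1 h2 h3
      exact (hM (esymT F A n i a)).2 (Ideal.subset_span ⟨i, a, h1, h2, h3, rfl⟩)
  · rw [Ideal.span_le]
    rintro _ ⟨i, a, h1, _, h3, rfl⟩
    rw [SetLike.mem_coe, RingHom.mem_ker]
    apply Subtype.ext
    change mapPow F A n f (esym F A n i a) = 0
    rw [esym, map_sum]
    refine Finset.sum_eq_zero fun S hS => ?_
    rw [mapPow_tprod]
    rw [Finset.mem_powersetCard_univ] at hS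
    obtain ⟨j, hj⟩ : S.Nonempty := Finset.card_pos.1 (by omega)
    exact MultilinearMap.map_coord_zero _ j (by simp [hj, h3])

end SymmetricProduct
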